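/- arXiv:1807.00497 — 2 statements merged into one kernel-verified Lean document; each statement's English description precedes it below -/
import Mathlib

section
/- Let ε,b > 0 and let c:(−ε,b) → ℝ^{n+2} be smooth with ⟨c(t),c(t)⟩ = 0, c(t) ≠ 0 and ⟨c′(t),c′(t)⟩ = 1 for all t. Let λ ∈ ℝ with 2λ ≤ 1, fix p ∈ (0,b), and let T:(0,b) → End(ℝ^{n+2}) be differentiable with T(p) = id and T′(t) = (λ/t²)·(T(t)∘(c(t)∧c′(t))) for all t ∈ (0,b). Then the curve t ↦ T(t)(c(t)) converges projectively as t → 0⁺: there exist nonzero reals r(t) and a nonzero vector x ∈ ℝ^{n+2} such that r(t)·T(t)(c(t)) → x as t → 0⁺. -/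
open scoped BigOperators Topology
open Filter Set MeasureTheory

noncomputable section

abbrev E (n : ℕ) := EuclideanSpace ℝ (Fin (n + 2))

/-- Minkowski inner product of signature (n+1,1). -/
def mink {n : ℕ} (x y : E n) : ℝ :=
  ∑ i, (if i = Fin.last (n + 1) then (-1 : ℝ) else 1) * x i * y i

variable {n : ℕ}

lemma mink_comm (x y : E n) : mink x y = mink y x :=
  Finset.sum_congr rfl fun i _ => by ring

lemma mink_add_right (v x y : E n) : mink v (x + y) = mink v x + mink v y := by
  simp [mink, mul_add, Finset.sum_add_distrib]

lemma mink_smul_right (v : E n) (c : ℝ) (x : E n) : mink v (c • x) = c * mink v x := by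
  unfold mink
  rw [Finset.mul_sum]
  refine Finset.sum_congr rfl fun i _ => ?_
  simp only [PiLp.smul_apply, smul_eq_mul]
  ring

lemma mink_add_left (x y v : E n) : mink (x + y) v = mink x v + mink y v := by
  rw [mink_comm, mink_add_right, mink_comm v x, mink_comm v y]

lemma mink_smul_left (c : ℝ) (x v : E n) : mink (c • x) v = c * mink x v := by
  rw [mink_comm, mink_smul_right, mink_comm v x]

/-- `v ∧ w` as an endomorphism: `x ↦ ⟨v,x⟩ w − ⟨w,x⟩ v`. -/
def wedge {n : ℕ} (v w : E n) : E n →L[ℝ] E n :=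
  LinearMap.toContinuousLinearMap
    { toFun := fun x => mink v x • w - mink w x • v
      map_add' := by
        intro x y
        simp only [mink_add_right, add_smul]
        abel
      map_smul' := by
        intro c x
        simp only [mink_smul_right, RingHom.id_apply, mul_smul, smul_sub] }

/-- rank one endomorphism `vw* : x ↦ ⟨x,w⟩ v`. -/
def rankOne {n : ℕ} (v w : E n) : E n →L[ℝ] E n :=
  LinearMap.toContinuousLinearMap
    { toFun := fun x => mink x w • v
      map_add' := by
        intro x y
        simp only [mink_add_left, add_smul]
      map_smul' := by
        intro c x
        simp only [mink_smul_left, RingHom.id_apply, mul_smul] }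

/-!
By duality `⟨T c, y⟩ = ⟨c, T* y⟩`, where `T*` is the Minkowski adjoint, and `z = T* y` is a parallel
section: `z' = -(λ/t²) (c ∧ c') z`. For such `z` the scalars `⟨c, z⟩/t`, `⟨c', z⟩`, `t ⟨c'', z⟩`
satisfy, up to a perturbation by `t ⟨c''', z⟩`, a linear Euler system with exponents `0` and `±σ`,
where `σ² = 1 - 2λ`. Triangular coordinates `(α, g, w)` with `α = ⟨c, z⟩/t` put it in the form
`t α' = σ α + g`, `t g' = -σ g + w`, `w' = t ⟨c''', z⟩`.

A weighted energy of `(α, g, w, t z)` grows at most like `t ^ (-(2σ + 1))`. Hence the leading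
combination `t ^ σ (w - σ g)` has derivative `O(t ^ (-1/2))`, which is integrable, so it converges,
and l'Hôpital's rule recovers the growth of `α` from its limit. This gives the limit of `T c` after
rescaling, tested against every `y`. It does not vanish: `T*` is surjective because `T` is
orthogonal, so some `z` passes through `c(t₀)`, and for small `t₀` the limit of its leading
combination stays close to the initial value `-t₀ ^ (σ + 1)`.
-/

section Calculus

variable {F : Type*} [NormedAddCommGroup F] [NormedSpace ℝ F]

lemma norm_sub_le_of_norm_hasDerivAt_le {f f' : ℝ → F} {h h' : ℝ → ℝ} {s t : ℝ} (hst : s ≤ t)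
    (hf : ∀ u ∈ Icc s t, HasDerivAt f (f' u) u) (hh : ∀ u ∈ Icc s t, HasDerivAt h (h' u) u)
    (hle : ∀ u ∈ Icc s t, ‖f' u‖ ≤ h' u) : ‖f t - f s‖ ≤ h t - h s :=
  image_norm_le_of_norm_deriv_right_le_deriv_boundary' (f := fun u => f u - f s)
    (B := fun u => h u - h s)
    (fun u hu => ((hf u hu).sub_const _).continuousAt.continuousWithinAt)
    (fun u hu => ((hf u (Ico_subset_Icc_self hu)).sub_const _).hasDerivWithinAt)
    (by simp)
    (fun u hu => ((hh u hu).sub_const _).continuousAt.continuousWithinAt)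
    (fun u hu => ((hh u (Ico_subset_Icc_self hu)).sub_const _).hasDerivWithinAt)
    (fun u hu => hle u (Ico_subset_Icc_self hu)) (right_mem_Icc.2 hst)

lemma exists_tendsto_nhdsGT_of_norm_hasDerivAt_le [CompleteSpace F] {f f' : ℝ → F}
    {h h' : ℝ → ℝ} {a t₀ h₀ : ℝ} (hat : a < t₀) (hf : ∀ t ∈ Ioc a t₀, HasDerivAt f (f' t) t)
    (hh : ∀ t ∈ Ioc a t₀, HasDerivAt h (h' t) t) (hle : ∀ t ∈ Ioc a t₀, ‖f' t‖ ≤ h' t)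
    (hlim : Tendsto h (𝓝[>] a) (𝓝 h₀)) :
    ∃ l, Tendsto f (𝓝[>] a) (𝓝 l) ∧ ‖f t₀ - l‖ ≤ h t₀ - h₀ := by
  have hsub : ∀ s ∈ Ioc a t₀, ∀ t ∈ Ioc a t₀, s ≤ t → ‖f t - f s‖ ≤ h t - h s :=
    fun s hs t ht hst => norm_sub_le_of_norm_hasDerivAt_le hst
      (fun u hu => hf u ⟨hs.1.trans_le hu.1, hu.2.trans ht.2⟩)
      (fun u hu => hh u ⟨hs.1.trans_le hu.1, hu.2.trans ht.2⟩)
      (fun u hu => hle u ⟨hs.1.trans_le hu.1, hu.2.trans ht.2⟩)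
  have hdist : ∀ s ∈ Ioc a t₀, ∀ t ∈ Ioc a t₀, dist (f s) (f t) ≤ dist (h s) (h t) := by
    intro s hs t ht
    rcases le_total s t with hst | hst
    · rw [dist_comm, dist_comm (h s), dist_eq_norm, Real.dist_eq]
      exact (hsub s hs t ht hst).trans (le_abs_self _)
    · rw [dist_eq_norm, Real.dist_eq]
      exact (hsub t ht s hs hst).trans (le_abs_self _)
  have hmem : ∀ᶠ t in 𝓝[>] a, t ∈ Ioc a t₀ := Ioc_mem_nhdsGT hat
  have hcauchy : Cauchy (map f (𝓝[>] a)) := by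
    rw [cauchy_map_iff', tendsto_uniformity_iff_dist_tendsto_zero]
    refine squeeze_zero' (.of_forall fun _ => dist_nonneg) ?_
      (tendsto_uniformity_iff_dist_tendsto_zero.1 (cauchy_map_iff'.1 hlim.cauchy_map))
    filter_upwards [hmem.prod_mk hmem] with q hq using hdist _ hq.1 _ hq.2
  obtain ⟨l, hl⟩ := cauchy_map_iff_exists_tendsto.1 hcauchy
  refine ⟨l, hl, le_of_tendsto_of_tendsto (hl.const_sub (f t₀)).norm (hlim.const_sub (h t₀)) ?_⟩
  filter_upwards [hmem] with t ht using hsub t ht t₀ ⟨hat, le_rfl⟩ ht.2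

lemma isLittleO_nhdsGT_of_hasDerivAt_isLittleO {f f' : ℝ → F} {g g' : ℝ → ℝ} {a : ℝ}
    (hf : ∀ᶠ t in 𝓝[>] a, HasDerivAt f (f' t) t) (hg : ∀ᶠ t in 𝓝[>] a, HasDerivAt g (g' t) t)
    (hneg : ∀ᶠ t in 𝓝[>] a, g' t < 0) (htop : Tendsto g (𝓝[>] a) atTop)
    (ho : f' =o[𝓝[>] a] g') : f =o[𝓝[>] a] g := by
  refine Asymptotics.isLittleO_iff.2 fun δ hδ => ?_
  have hle : ∀ᶠ t in 𝓝[>] a, ‖f' t‖ ≤ -(δ / 2 * g' t) := by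
    filter_upwards [hneg, ho.def (half_pos hδ)] with t ht hft
    rwa [Real.norm_of_nonpos ht.le, mul_neg] at hft
  obtain ⟨b, hab, hb⟩ := mem_nhdsGT_iff_exists_Ioc_subset.1 (hf.and (hg.and hle))
  filter_upwards [Ioc_mem_nhdsGT hab, htop.eventually_ge_atTop 0,
    htop.eventually_ge_atTop ((‖f b‖ - δ / 2 * g b) / (δ / 2))] with t ht hg0 hlarge
  have hIoc : ∀ u ∈ Icc t b, u ∈ Ioc a b := fun u hu => ⟨ht.1.trans_le hu.1, hu.2⟩
  have hsub : ‖f b - f t‖ ≤ -(δ / 2 * g b) - -(δ / 2 * g t) :=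
    norm_sub_le_of_norm_hasDerivAt_le ht.2 (fun u hu => (hb (hIoc u hu)).1)
      (fun u hu => ((hb (hIoc u hu)).2.1.const_mul _).fun_neg) (fun u hu => (hb (hIoc u hu)).2.2)
  rw [div_le_iff₀ (half_pos hδ)] at hlarge
  rw [Real.norm_of_nonneg hg0]
  linarith [norm_le_norm_add_norm_sub (f b) (f t)]

lemma lhopital_atTop_nhdsGT {f f' g g' : ℝ → ℝ} {a l : ℝ}
    (hf : ∀ᶠ t in 𝓝[>] a, HasDerivAt f (f' t) t) (hg : ∀ᶠ t in 𝓝[>] a, HasDerivAt g (g' t) t)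
    (hneg : ∀ᶠ t in 𝓝[>] a, g' t < 0) (htop : Tendsto g (𝓝[>] a) atTop)
    (hdiv : Tendsto (fun t => f' t / g' t) (𝓝[>] a) (𝓝 l)) :
    Tendsto (fun t => f t / g t) (𝓝[>] a) (𝓝 l) := by
  have ho : (fun t => f' t - l * g' t) =o[𝓝[>] a] g' := by
    refine (Asymptotics.isLittleO_iff_tendsto' (hneg.mono fun t ht h => absurd h ht.ne)).2 ?_
    refine (sub_self l ▸ hdiv.sub_const l).congr' ?_
    filter_upwards [hneg] with t ht
    field_simp [ht.ne]
  have hsub := (isLittleO_nhdsGT_of_hasDerivAt_isLittleO (f := fun t => f t - l * g t)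
    (by filter_upwards [hf, hg] with t hft hgt using hft.fun_sub (hgt.const_mul l))
    hg hneg htop ho).tendsto_div_nhds_zero
  refine (zero_add l ▸ hsub.add_const l).congr' ?_
  filter_upwards [htop.eventually_gt_atTop 0] with t ht
  field_simp
  ring

lemma monotoneOn_rpow_mul_of_neg_le {f f' : ℝ → ℝ} {k τ : ℝ}
    (hf : ∀ t ∈ Ioo 0 τ, HasDerivAt f (f' t) t) (hle : ∀ t ∈ Ioo 0 τ, -(k * f t) ≤ t * f' t) :
    MonotoneOn (fun t => t ^ k * f t) (Ioo 0 τ) := by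
  have hderiv : ∀ t ∈ Ioo 0 τ,
      HasDerivAt (fun t => t ^ k * f t) (t ^ (k - 1) * (k * f t + t * f' t)) t := by
    intro t ht
    have ht0 : t ≠ 0 := ht.1.ne'
    refine ((Real.hasDerivAt_rpow_const (.inl ht0)).fun_mul (hf t ht)).congr_deriv ?_
    rw [Real.rpow_sub_one ht0]
    field_simp
  refine monotoneOn_of_hasDerivWithinAt_nonneg (convex_Ioo 0 τ)
    (fun t ht => (hderiv t ht).continuousAt.continuousWithinAt)
    (fun t ht => (hderiv t (interior_subset ht)).hasDerivWithinAt) fun t ht => ?_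
  have hmem := interior_subset ht
  exact mul_nonneg (Real.rpow_nonneg hmem.1.le _) (by linarith [hle t hmem])

end Calculus

section EulerAsymptotics

lemma tendsto_of_euler_ode {u v : ℝ → ℝ} {κ l : ℝ} (hκ : 0 < κ)
    (hu : ∀ᶠ t in 𝓝[>] 0, HasDerivAt u ((κ * u t + v t) / t) t)
    (hv : Tendsto v (𝓝[>] 0) (𝓝 l)) : Tendsto u (𝓝[>] 0) (𝓝 (-l / κ)) := by
  have hpos : ∀ᶠ t : ℝ in 𝓝[>] 0, 0 < t := self_mem_nhdsWithin
  have hlim : Tendsto (fun t => t ^ (-κ) * u t / t ^ (-κ)) (𝓝[>] 0) (𝓝 (-l / κ)) := by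
    refine lhopital_atTop_nhdsGT (f' := fun t => t ^ (-κ - 1) * v t)
      (g' := fun t => -κ * t ^ (-κ - 1)) ?_ ?_ ?_
      (tendsto_rpow_neg_nhdsGT_zero (neg_neg_iff_pos.2 hκ)) ?_
    · filter_upwards [hpos, hu] with t ht hut
      refine ((Real.hasDerivAt_rpow_const (.inl ht.ne')).fun_mul hut).congr_deriv ?_
      rw [Real.rpow_sub_one ht.ne']
      field_simp
      ring
    · filter_upwards [hpos] with t ht using Real.hasDerivAt_rpow_const (.inl ht.ne')
    · filter_upwards [hpos] with t ht
      exact mul_neg_of_neg_of_pos (neg_neg_iff_pos.2 hκ) (Real.rpow_pos_of_pos ht _)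
    · refine (hv.neg.div_const κ).congr' ?_
      filter_upwards [hpos] with t ht
      have := (Real.rpow_pos_of_pos ht (-κ - 1)).ne'
      field_simp
  refine hlim.congr' ?_
  filter_upwards [hpos] with t ht
  exact mul_div_cancel_left₀ _ (Real.rpow_pos_of_pos ht _).ne'

/-- The reciprocal of the growth rate as `t → 0⁺` of solutions of the Euler system `t α' = σ α + g`,
`t g' = -σ g + w`, normalized so that `eulerScale σ t * α t` has the same limit as
`t ^ σ * (w t - σ * g t)`. In the resonant case `σ = 0` the rate `(log t) ^ 2` is replaced by
`1 + (log t) ^ 2`, which does not vanish at `t = 1`. -/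
def eulerScale (σ t : ℝ) : ℝ := if σ = 0 then 2 / (1 + Real.log t ^ 2) else 2 * σ ^ 2 * t ^ σ

lemma eulerScale_ne_zero (σ : ℝ) {t : ℝ} (ht : 0 < t) : eulerScale σ t ≠ 0 := by
  unfold eulerScale
  split_ifs with hσ <;> positivity

lemma tendsto_log_sq_scale_mul {α g w : ℝ → ℝ} {l : ℝ}
    (hα : ∀ᶠ t in 𝓝[>] 0, HasDerivAt α (g t / t) t)
    (hg : ∀ᶠ t in 𝓝[>] 0, HasDerivAt g (w t / t) t) (hw : Tendsto w (𝓝[>] 0) (𝓝 l)) :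
    Tendsto (fun t => 2 / (1 + Real.log t ^ 2) * α t) (𝓝[>] 0) (𝓝 l) := by
  have hpos : ∀ᶠ t : ℝ in 𝓝[>] 0, 0 < t := self_mem_nhdsWithin
  have hlog_neg : ∀ᶠ t : ℝ in 𝓝[>] 0, Real.log t < 0 :=
    Real.tendsto_log_nhdsGT_zero.eventually_lt_atBot 0
  have htop : Tendsto (fun t => -Real.log t) (𝓝[>] 0) atTop :=
    tendsto_neg_atBot_atTop.comp Real.tendsto_log_nhdsGT_zero
  have hg_log : Tendsto (fun t => g t / -Real.log t) (𝓝[>] 0) (𝓝 (-l)) := by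
    refine lhopital_atTop_nhdsGT (g' := fun t => -t⁻¹) hg ?_ ?_ htop (hw.neg.congr' ?_)
    · filter_upwards [hpos] with t ht using (Real.hasDerivAt_log ht.ne').neg
    · filter_upwards [hpos] with t ht using neg_neg_of_pos (inv_pos.2 ht)
    · filter_upwards [hpos] with t ht
      field_simp
  have hα_log : Tendsto (fun t => α t / ((1 + (-Real.log t) ^ 2) / 2)) (𝓝[>] 0) (𝓝 l) := by
    refine lhopital_atTop_nhdsGT (g' := fun t => Real.log t / t) hα ?_ ?_ ?_
      ((neg_neg l ▸ hg_log.neg).congr' ?_)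
    · filter_upwards [hpos] with t ht
      refine ((((Real.hasDerivAt_log ht.ne').fun_neg.fun_pow 2).const_add 1).div_const
        2).congr_deriv ?_
      simp only [Nat.cast_ofNat, Nat.add_one_sub_one, pow_one, mul_neg, neg_mul, neg_neg]
      field_simp
    · filter_upwards [hpos, hlog_neg] with t ht hlog using div_neg_of_neg_of_pos hlog ht
    · exact (tendsto_atTop_add_const_left _ 1
        ((tendsto_pow_atTop two_ne_zero).comp htop)).atTop_div_const two_pos
    · filter_upwards [hpos, hlog_neg] with t ht hlog
      have := hlog.ne
      field_simp
  refine hα_log.congr fun t => ?_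
  rw [neg_sq, div_div_eq_mul_div, mul_comm, mul_div_right_comm]

lemma tendsto_eulerScale_mul {α g w : ℝ → ℝ} {σ l : ℝ} (hσ : 0 ≤ σ)
    (hα : ∀ᶠ t in 𝓝[>] 0, HasDerivAt α ((σ * α t + g t) / t) t)
    (hg : ∀ᶠ t in 𝓝[>] 0, HasDerivAt g ((-σ * g t + w t) / t) t)
    (hl : Tendsto (fun t => t ^ σ * (w t - σ * g t)) (𝓝[>] 0) (𝓝 l)) :
    Tendsto (fun t => eulerScale σ t * α t) (𝓝[>] 0) (𝓝 l) := by
  rcases hσ.eq_or_lt with rfl | hσ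
  · simp only [zero_mul, zero_add, neg_zero, Real.rpow_zero, one_mul, sub_zero] at hα hg hl
    simpa only [eulerScale, if_true] using tendsto_log_sq_scale_mul hα hg hl
  have hpos : ∀ᶠ t : ℝ in 𝓝[>] 0, 0 < t := self_mem_nhdsWithin
  have hg_lim : Tendsto (fun t => t ^ σ * g t) (𝓝[>] 0) (𝓝 (-l / σ)) := by
    refine tendsto_of_euler_ode hσ ?_ hl
    filter_upwards [hpos, hg] with t ht hgt
    refine ((Real.hasDerivAt_rpow_const (.inl ht.ne')).fun_mul hgt).congr_deriv ?_
    rw [Real.rpow_sub_one ht.ne']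
    field_simp
    ring
  have hα_lim : Tendsto (fun t => t ^ σ * α t) (𝓝[>] 0) (𝓝 (-(-l / σ) / (2 * σ))) := by
    refine tendsto_of_euler_ode (by positivity) ?_ hg_lim
    filter_upwards [hpos, hα] with t ht hαt
    refine ((Real.hasDerivAt_rpow_const (.inl ht.ne')).fun_mul hαt).congr_deriv ?_
    rw [Real.rpow_sub_one ht.ne']
    field_simp
    ring
  have hscale : 2 * σ ^ 2 * (-(-l / σ) / (2 * σ)) = l := by
    field_simp
  refine (hscale ▸ hα_lim.const_mul (2 * σ ^ 2)).congr fun t => ?_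
  simp only [eulerScale, if_neg hσ.ne', mul_assoc]

end EulerAsymptotics

section PerturbedEulerSystem

variable {V : Type*} [NormedAddCommGroup V]

/-- The quadratic energy that controls the solutions of a `PerturbedEulerSystem`. The weights
`1, 4, 16` let each diagonal term absorb the coupling to the next one, and that of `z` absorbs the
perturbations. -/
def eulerEnergy (K a g w : ℝ) (z : V) : ℝ := a ^ 2 + 4 * g ^ 2 + 16 * w ^ 2 + (‖z‖ / (2 * K)) ^ 2

lemma norm_le_sqrt_eulerEnergy {K : ℝ} (hK : 0 < K) (a g w : ℝ) (z : V) :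
    ‖z‖ ≤ 2 * K * √(eulerEnergy K a g w z) := by
  rw [← div_le_iff₀' (by positivity)]
  exact Real.le_sqrt_of_sq_le (le_add_of_nonneg_left (by positivity))

lemma neg_le_eulerEnergy_rate {σ a g w s x y : ℝ} (hσ : 0 ≤ σ) (hx : |x| ≤ s / 32)
    (hy : |y| ≤ s * (|a| + |g|) / 2) :
    -((σ + 1 / 2) * (a ^ 2 + 4 * g ^ 2 + 16 * w ^ 2 + s ^ 2)) ≤
      a * (σ * a + g) + 4 * g * (-σ * g + w) + 16 * w * x + (s ^ 2 + y) := by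
  have hwx : -(|w| * (s / 32)) ≤ w * x := by
    refine neg_le_of_abs_le ?_
    rw [abs_mul]
    gcongr
  have hgw : -(|g| * |w|) ≤ g * w := abs_mul g w ▸ neg_abs_le _
  have hag : -(|a| * |g|) ≤ a * g := abs_mul a g ▸ neg_abs_le _
  nlinarith [neg_le_of_abs_le hy, sq_abs a, sq_abs g, sq_abs w, sq_nonneg (|a| - |g| - s / 2),
    sq_nonneg (|g| - 2 * |w|), sq_nonneg (|g| - s), sq_nonneg (|w| - s),
    mul_nonneg hσ (sq_nonneg a), mul_nonneg hσ (sq_nonneg w), mul_nonneg hσ (sq_nonneg s)]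

variable [InnerProductSpace ℝ V]

/-- A scalar Euler system on `(0, τ)` with exponents `σ`, `-σ`, `0` whose last equation is perturbed
by a term `f`, which is controlled by a vector-valued solution `Z` of a perturbed Euler equation of
exponent `1`. The interval is short in terms of the constant `K` bounding the perturbations. -/
structure PerturbedEulerSystem (σ K τ : ℝ) (α g w f : ℝ → ℝ) (Z R : ℝ → V) : Prop where
  exponent_nonneg : 0 ≤ σ
  bound_pos : 0 < K
  length_le : 64 * K ^ 2 * τ ≤ 1
  hasDerivAt_fst : ∀ t ∈ Ioo 0 τ, HasDerivAt α ((σ * α t + g t) / t) t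
  hasDerivAt_snd : ∀ t ∈ Ioo 0 τ, HasDerivAt g ((-σ * g t + w t) / t) t
  hasDerivAt_trd : ∀ t ∈ Ioo 0 τ, HasDerivAt w (f t) t
  hasDerivAt_vec : ∀ t ∈ Ioo 0 τ, HasDerivAt Z (t⁻¹ • (Z t + R t)) t
  abs_perturbation_le : ∀ t ∈ Ioo 0 τ, |f t| ≤ K * ‖Z t‖
  norm_perturbation_le : ∀ t ∈ Ioo 0 τ, ‖R t‖ ≤ K * (|α t| + |g t|)

namespace PerturbedEulerSystem

variable {σ K τ : ℝ} {α g w f : ℝ → ℝ} {Z R : ℝ → V}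

lemma abs_mul_perturbation_le (h : PerturbedEulerSystem σ K τ α g w f Z R) {t : ℝ}
    (ht : t ∈ Ioo 0 τ) : |t * f t| ≤ ‖Z t‖ / (2 * K) / 32 := by
  have hK := h.bound_pos
  have ht_le : 64 * K ^ 2 * t ≤ 1 :=
    (mul_le_mul_of_nonneg_left ht.2.le (by positivity)).trans h.length_le
  rw [abs_mul, abs_of_pos ht.1, div_div, le_div_iff₀ (by positivity)]
  calc t * |f t| * (2 * K * 32) ≤ t * (K * ‖Z t‖) * (2 * K * 32) := by
        gcongr
        exacts [ht.1.le, h.abs_perturbation_le t ht]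
    _ = 64 * K ^ 2 * t * ‖Z t‖ := by ring
    _ ≤ ‖Z t‖ := mul_le_of_le_one_left (norm_nonneg _) ht_le

lemma abs_inner_perturbation_le (h : PerturbedEulerSystem σ K τ α g w f Z R) {t : ℝ}
    (ht : t ∈ Ioo 0 τ) :
    |inner ℝ (Z t) (R t) / (2 * K) ^ 2| ≤ ‖Z t‖ / (2 * K) * (|α t| + |g t|) / 2 := by
  have hK := h.bound_pos
  rw [abs_div, abs_of_pos (by positivity : 0 < (2 * K) ^ 2), div_le_iff₀ (by positivity)]
  calc |inner ℝ (Z t) (R t)| ≤ ‖Z t‖ * (K * (|α t| + |g t|)) :=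
        (abs_real_inner_le_norm _ _).trans
          (mul_le_mul_of_nonneg_left (h.norm_perturbation_le t ht) (norm_nonneg _))
    _ = ‖Z t‖ / (2 * K) * (|α t| + |g t|) / 2 * (2 * K) ^ 2 := by
        field_simp

lemma monotoneOn_rpow_mul_eulerEnergy (h : PerturbedEulerSystem σ K τ α g w f Z R) :
    MonotoneOn (fun t => t ^ (2 * σ + 1) * eulerEnergy K (α t) (g t) (w t) (Z t)) (Ioo 0 τ) := by
  have hK := h.bound_pos
  refine monotoneOn_rpow_mul_of_neg_le
    (f' := fun t => 2 / t * (α t * (σ * α t + g t) + 4 * g t * (-σ * g t + w t)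
      + 16 * w t * (t * f t) + ((‖Z t‖ / (2 * K)) ^ 2 + inner ℝ (Z t) (R t) / (2 * K) ^ 2)))
    (fun t ht => ?_) fun t ht => ?_
  · have hnorm : HasDerivAt (fun t => ‖Z t‖ ^ 2)
        (2 / t * (‖Z t‖ ^ 2 + inner ℝ (Z t) (R t))) t := by
      refine (h.hasDerivAt_vec t ht).norm_sq.congr_deriv ?_
      rw [real_inner_smul_right, inner_add_right, real_inner_self_eq_norm_sq]
      ring
    simp only [eulerEnergy, div_pow]
    refine (((((h.hasDerivAt_fst t ht).fun_pow 2).fun_add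
      (((h.hasDerivAt_snd t ht).fun_pow 2).const_mul 4)).fun_add
      (((h.hasDerivAt_trd t ht).fun_pow 2).const_mul 16)).fun_add
      (hnorm.div_const ((2 * K) ^ 2))).congr_deriv ?_
    have := ht.1.ne'
    field_simp
    ring
  · have hrate := neg_le_eulerEnergy_rate (w := w t) h.exponent_nonneg
      (h.abs_mul_perturbation_le ht) (h.abs_inner_perturbation_le ht)
    rw [← mul_assoc, mul_div_cancel₀ _ ht.1.ne', eulerEnergy]
    linarith

lemma rpow_mul_sqrt_eulerEnergy_le (h : PerturbedEulerSystem σ K τ α g w f Z R) {t t₀ : ℝ}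
    (ht : t ∈ Ioo 0 τ) (ht₀ : t₀ ∈ Ioo 0 τ) (hle : t ≤ t₀) :
    t ^ σ * √t * √(eulerEnergy K (α t) (g t) (w t) (Z t)) ≤
      t₀ ^ σ * √t₀ * √(eulerEnergy K (α t₀) (g t₀) (w t₀) (Z t₀)) := by
  have hrw : ∀ u ∈ Ioo 0 τ, ∀ e, √(u ^ (2 * σ + 1) * e) = u ^ σ * √u * √e := fun u hu e => by
    rw [Real.sqrt_mul (Real.rpow_nonneg hu.1.le _), Real.rpow_add_one hu.1.ne',
      Real.sqrt_mul (Real.rpow_nonneg hu.1.le _), mul_comm 2 σ, Real.rpow_mul hu.1.le,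
      Real.rpow_two, Real.sqrt_sq (Real.rpow_nonneg hu.1.le _)]
  rw [← hrw t ht, ← hrw t₀ ht₀]
  exact Real.sqrt_le_sqrt (h.monotoneOn_rpow_mul_eulerEnergy ht ht₀ hle)

lemma hasDerivAt_rpow_mul_leading (h : PerturbedEulerSystem σ K τ α g w f Z R) {t : ℝ}
    (ht : t ∈ Ioo 0 τ) : HasDerivAt (fun t => t ^ σ * (w t - σ * g t)) (t ^ σ * f t) t := by
  have ht0 := ht.1.ne'
  refine ((Real.hasDerivAt_rpow_const (.inl ht0)).fun_mul ((h.hasDerivAt_trd t ht).fun_sub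
    ((h.hasDerivAt_snd t ht).const_mul σ))).congr_deriv ?_
  rw [Real.rpow_sub_one ht0]
  field_simp
  ring

lemma exists_tendsto_rpow_mul_leading (h : PerturbedEulerSystem σ K τ α g w f Z R) {t₀ : ℝ}
    (ht₀ : t₀ ∈ Ioo 0 τ) :
    ∃ l, Tendsto (fun t => t ^ σ * (w t - σ * g t)) (𝓝[>] 0) (𝓝 l) ∧
      |t₀ ^ σ * (w t₀ - σ * g t₀) - l| ≤
        4 * K ^ 2 * t₀ * t₀ ^ σ * √(eulerEnergy K (α t₀) (g t₀) (w t₀) (Z t₀)) := by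
  have hK := h.bound_pos
  set M := t₀ ^ σ * √t₀ * √(eulerEnergy K (α t₀) (g t₀) (w t₀) (Z t₀)) with hM
  have hmem : ∀ t ∈ Ioc 0 t₀, t ∈ Ioo 0 τ := fun t ht => ⟨ht.1, ht.2.trans_lt ht₀.2⟩
  have hderiv_le : ∀ t ∈ Ioc 0 t₀, ‖t ^ σ * f t‖ ≤ 4 * K ^ 2 * M * (1 / (2 * √t)) := by
    intro t ht
    have htσ := Real.rpow_pos_of_pos ht.1 σ
    have hsqrt := Real.sqrt_pos.2 ht.1
    rw [norm_mul, Real.norm_of_nonneg htσ.le, Real.norm_eq_abs, mul_one_div,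
      le_div_iff₀ (by positivity)]
    calc t ^ σ * |f t| * (2 * √t)
        ≤ t ^ σ * (K * (2 * K * √(eulerEnergy K (α t) (g t) (w t) (Z t)))) * (2 * √t) := by
          gcongr
          exact (h.abs_perturbation_le t (hmem t ht)).trans
            (mul_le_mul_of_nonneg_left (norm_le_sqrt_eulerEnergy hK _ _ _ _) hK.le)
      _ = 4 * K ^ 2 * (t ^ σ * √t * √(eulerEnergy K (α t) (g t) (w t) (Z t))) := by ring
      _ ≤ 4 * K ^ 2 * M := by
          gcongr
          exact h.rpow_mul_sqrt_eulerEnergy_le (hmem t ht) ht₀ ht.2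
  have hsqrt_lim : Tendsto (fun t => 4 * K ^ 2 * M * √t) (𝓝[>] 0) (𝓝 0) := by
    have := (Real.continuous_sqrt.const_mul (4 * K ^ 2 * M)).tendsto' 0 0 (by simp)
    exact this.mono_left nhdsWithin_le_nhds
  obtain ⟨l, hl, hle⟩ := exists_tendsto_nhdsGT_of_norm_hasDerivAt_le ht₀.1
    (fun t ht => h.hasDerivAt_rpow_mul_leading (hmem t ht))
    (fun t ht => (Real.hasDerivAt_sqrt ht.1.ne').const_mul _) hderiv_le hsqrt_lim
  refine ⟨l, hl, hle.trans_eq ?_⟩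
  linear_combination 4 * K ^ 2 * √t₀ * hM
    + 4 * K ^ 2 * t₀ ^ σ * √(eulerEnergy K (α t₀) (g t₀) (w t₀) (Z t₀)) * Real.sq_sqrt ht₀.1.le

lemma exists_tendsto_eulerScale_mul (h : PerturbedEulerSystem σ K τ α g w f Z R) {t₀ : ℝ}
    (ht₀ : t₀ ∈ Ioo 0 τ) :
    ∃ l, Tendsto (fun t => eulerScale σ t * α t) (𝓝[>] 0) (𝓝 l) ∧
      |t₀ ^ σ * (w t₀ - σ * g t₀) - l| ≤
        4 * K ^ 2 * t₀ * t₀ ^ σ * √(eulerEnergy K (α t₀) (g t₀) (w t₀) (Z t₀)) := by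
  obtain ⟨l, hl, hle⟩ := h.exists_tendsto_rpow_mul_leading ht₀
  have hmem : ∀ᶠ t in 𝓝[>] 0, t ∈ Ioo 0 τ := Ioo_mem_nhdsGT (ht₀.1.trans ht₀.2)
  exact ⟨l, tendsto_eulerScale_mul h.exponent_nonneg (hmem.mono h.hasDerivAt_fst)
    (hmem.mono h.hasDerivAt_snd) hl, hle⟩

lemma exists_tendsto_eulerScale_mul_ne_zero (h : PerturbedEulerSystem σ K τ α g w f Z R) {t₀ : ℝ}
    (ht₀ : t₀ ∈ Ioo 0 τ) (hα : α t₀ = 0) (hg : g t₀ = 0) (hw : w t₀ = -t₀) (hZ : ‖Z t₀‖ ≤ K * t₀) :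
    ∃ l ≠ 0, Tendsto (fun t => eulerScale σ t * α t) (𝓝[>] 0) (𝓝 l) := by
  have hK := h.bound_pos
  have h0 := ht₀.1
  have hsqrt : √(eulerEnergy K (α t₀) (g t₀) (w t₀) (Z t₀)) ≤ 5 * t₀ := by
    have hZ' : ‖Z t₀‖ / (2 * K) ≤ t₀ := by
      rw [div_le_iff₀ (by positivity)]
      linarith [mul_pos hK h0]
    refine Real.sqrt_le_iff.2 ⟨by positivity, ?_⟩
    rw [eulerEnergy, hα, hg, hw]
    linarith [pow_le_pow_left₀ (by positivity) hZ' 2, sq_nonneg t₀]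
  obtain ⟨l, hl, hle⟩ := h.exists_tendsto_eulerScale_mul ht₀
  refine ⟨l, ?_, hl⟩
  rintro rfl
  have hpos : 0 < t₀ ^ σ * t₀ := mul_pos (Real.rpow_pos_of_pos h0 σ) h0
  have hlead : t₀ ^ σ * (w t₀ - σ * g t₀) = -(t₀ ^ σ * t₀) := by
    rw [hw, hg]
    ring
  rw [hlead, sub_zero, abs_neg, abs_of_pos hpos] at hle
  have hsmall : 64 * K ^ 2 * t₀ ≤ 1 :=
    (mul_le_mul_of_nonneg_left ht₀.2.le (by positivity)).trans h.length_le
  have : t₀ ^ σ * t₀ ≤ 20 / 64 * (t₀ ^ σ * t₀) := calc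
    t₀ ^ σ * t₀ ≤ 4 * K ^ 2 * t₀ * t₀ ^ σ * (5 * t₀) := by
      refine hle.trans ?_
      gcongr
    _ = 20 / 64 * (64 * K ^ 2 * t₀) * (t₀ ^ σ * t₀) := by ring
    _ ≤ 20 / 64 * (t₀ ^ σ * t₀) := by
      gcongr
      exact mul_le_of_le_one_right (by norm_num) hsmall
  linarith

end PerturbedEulerSystem

end PerturbedEulerSystem

section Minkowski

/-- The reflection `(x₁, …, xₙ₊₁, xₙ₊₂) ↦ (x₁, …, xₙ₊₁, -xₙ₊₂)`, which relates the Minkowski product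
to the Euclidean one. -/
def timeReflection (n : ℕ) : E n ≃ₗᵢ[ℝ] E n :=
  (ℝ ∙ (EuclideanSpace.single (Fin.last (n + 1)) (1 : ℝ) : E n))ᗮ.reflection

lemma timeReflection_apply (x : E n) (i : Fin (n + 2)) :
    timeReflection n x i = (if i = Fin.last (n + 1) then (-1 : ℝ) else 1) * x i := by
  rw [timeReflection, Submodule.reflection_orthogonal_apply,
    Submodule.reflection_singleton_apply, EuclideanSpace.inner_single_left]
  by_cases hi : i = Fin.last (n + 1) <;> simp [hi, two_mul]

lemma timeReflection_timeReflection (x : E n) : timeReflection n (timeReflection n x) = x :=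
  Submodule.reflection_reflection _ x

lemma mink_eq_inner (x y : E n) : mink x y = inner ℝ x (timeReflection n y) := by
  rw [mink, PiLp.inner_apply]
  refine Finset.sum_congr rfl fun i _ => ?_
  rw [timeReflection_apply, RCLike.inner_apply, conj_trivial]
  ring

lemma abs_mink_le (x y : E n) : |mink x y| ≤ ‖x‖ * ‖y‖ := by
  rw [mink_eq_inner, ← (timeReflection n).norm_map y]
  exact abs_real_inner_le_norm _ _

lemma ext_mink_left {y z : E n} (h : ∀ x, mink x y = mink x z) : y = z :=
  (timeReflection n).injective (ext_inner_left ℝ fun x => by simpa only [mink_eq_inner] using h x)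

lemma hasDerivAt_mink {u v : ℝ → E n} {u' v' : E n} {t : ℝ} (hu : HasDerivAt u u' t)
    (hv : HasDerivAt v v' t) :
    HasDerivAt (fun s => mink (u s) (v s)) (mink u' (v t) + mink (u t) v') t := by
  simp only [mink_eq_inner]
  exact (hu.inner ℝ ((timeReflection n).toContinuousLinearEquiv.hasFDerivAt.comp_hasDerivAt t
    hv)).congr_deriv (add_comm _ _)

lemma tendsto_mink_left {ι : Type*} {l : Filter ι} {f : ι → E n} {x : E n}
    (hf : Tendsto f l (𝓝 x)) (y : E n) : Tendsto (fun i => mink (f i) y) l (𝓝 (mink x y)) := by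
  simpa only [mink_eq_inner] using hf.inner tendsto_const_nhds

lemma exists_tendsto_of_mink_left {ι : Type*} {l : Filter ι} {f : ι → E n}
    (h : ∀ y, ∃ a, Tendsto (fun i => mink (f i) y) l (𝓝 a)) : ∃ x, Tendsto f l (𝓝 x) := by
  choose a ha using fun i : Fin (n + 2) => h (timeReflection n (EuclideanSpace.single i 1))
  simp only [mink_eq_inner, timeReflection_timeReflection, EuclideanSpace.inner_single_right,
    one_mul, conj_trivial] at ha
  exact ⟨WithLp.toLp 2 a, ((PiLp.continuous_toLp 2 _).tendsto a).comp (tendsto_pi_nhds.2 ha)⟩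

lemma wedge_apply (v w x : E n) : wedge v w x = mink v x • w - mink w x • v := rfl

lemma mink_wedge_right (x v w y : E n) :
    mink x (wedge v w y) = mink v y * mink x w - mink w y * mink x v := by
  rw [wedge_apply, sub_eq_add_neg, ← neg_smul, mink_add_right, mink_smul_right, mink_smul_right]
  ring

lemma norm_wedge_apply_le (v w x : E n) :
    ‖wedge v w x‖ ≤ |mink v x| * ‖w‖ + |mink w x| * ‖v‖ := by
  rw [wedge_apply, ← Real.norm_eq_abs, ← Real.norm_eq_abs, ← norm_smul, ← norm_smul]
  exact norm_sub_le _ _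

/-- The adjoint of an endomorphism with respect to the Minkowski product. -/
def minkAdjoint (A : E n →L[ℝ] E n) : E n →L[ℝ] E n :=
  (timeReflection n : E n →L[ℝ] E n) * star A * (timeReflection n : E n →L[ℝ] E n)

lemma mink_minkAdjoint_right (A : E n →L[ℝ] E n) (x y : E n) :
    mink x (minkAdjoint A y) = mink (A x) y := by
  rw [mink_eq_inner, mink_eq_inner]
  change inner ℝ x (timeReflection n (timeReflection n (star A (timeReflection n y)))) = _
  rw [timeReflection_timeReflection, ContinuousLinearMap.star_eq_adjoint,
    ContinuousLinearMap.adjoint_inner_right]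

lemma minkAdjoint_eq_of_mink {A B : E n →L[ℝ] E n} (h : ∀ x y, mink (A x) y = mink x (B y)) :
    minkAdjoint A = B :=
  ContinuousLinearMap.ext fun y => ext_mink_left fun x => by rw [mink_minkAdjoint_right, h]

lemma minkAdjoint_one : minkAdjoint (1 : E n →L[ℝ] E n) = 1 :=
  minkAdjoint_eq_of_mink fun _ _ => rfl

lemma minkAdjoint_smul_mul (k : ℝ) (A B : E n →L[ℝ] E n) :
    minkAdjoint (k • (A * B)) = k • (minkAdjoint B * minkAdjoint A) :=
  minkAdjoint_eq_of_mink fun x y => by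
    simp only [smul_apply, mul_apply_eq_comp, mink_smul_left, mink_smul_right,
      mink_minkAdjoint_right]

lemma minkAdjoint_wedge (v w : E n) : minkAdjoint (wedge v w) = -wedge v w :=
  minkAdjoint_eq_of_mink fun x y => by
    rw [neg_apply, ← neg_one_smul ℝ, mink_smul_right, mink_comm, mink_wedge_right,
      mink_wedge_right, mink_comm y w, mink_comm y v, mink_comm x w, mink_comm x v]
    ring

lemma hasDerivAt_minkAdjoint {A : ℝ → E n →L[ℝ] E n} {A' : E n →L[ℝ] E n} {t : ℝ}
    (hA : HasDerivAt A A' t) : HasDerivAt (fun s => minkAdjoint (A s)) (minkAdjoint A') t :=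
  (hA.star.const_mul _).mul_const _

end Minkowski

section Parallel

/-- `T` is a primitive on `I` of `λ` times the `1`-form `t⁻² c ∧ c' dt`, so that `t ↦ T t (c t)` is
a light-cone lift of a `λ`-Calapso transform of `c`. -/
def IsCalapsoPrimitive (lam : ℝ) (c : ℝ → E n) (T : ℝ → E n →L[ℝ] E n) (I : Set ℝ) : Prop :=
  ∀ t ∈ I, HasDerivAt T ((lam / t ^ 2) • (T t * wedge (c t) (deriv c t))) t

/-- `z` is a parallel section on `I` of the connection `d + λ t⁻² c ∧ c' dt`. -/
def IsParallelSection (lam : ℝ) (c z : ℝ → E n) (I : Set ℝ) : Prop :=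
  ∀ t ∈ I, HasDerivAt z (-(lam / t ^ 2) • wedge (c t) (deriv c t) (z t)) t

namespace IsCalapsoPrimitive

variable {lam : ℝ} {c : ℝ → E n} {T : ℝ → E n →L[ℝ] E n} {I : Set ℝ}

lemma hasDerivAt_minkAdjoint (hT : IsCalapsoPrimitive lam c T I) {t : ℝ} (ht : t ∈ I) :
    HasDerivAt (fun s => minkAdjoint (T s))
      (-(lam / t ^ 2) • (wedge (c t) (deriv c t) * minkAdjoint (T t))) t := by
  refine (_root_.hasDerivAt_minkAdjoint (hT t ht)).congr_deriv ?_
  rw [minkAdjoint_smul_mul, minkAdjoint_wedge]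
  ext1 y
  simp

lemma isParallelSection_minkAdjoint (hT : IsCalapsoPrimitive lam c T I) (y : E n) :
    IsParallelSection lam c (fun t => minkAdjoint (T t) y) I := fun t ht => by
  simpa using (hT.hasDerivAt_minkAdjoint ht).clm_apply (hasDerivAt_const t y)

lemma mul_minkAdjoint_eq_one (hT : IsCalapsoPrimitive lam c T I) (hI : IsOpen I)
    (hconn : IsPreconnected I) {p t : ℝ} (hp : p ∈ I) (hTp : T p = 1) (ht : t ∈ I) :
    T t * minkAdjoint (T t) = 1 := by
  have hderiv : ∀ s ∈ I, HasDerivAt (fun s => T s * minkAdjoint (T s)) 0 s := fun s hs => by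
    refine ((hT s hs).fun_mul (hT.hasDerivAt_minkAdjoint hs)).congr_deriv ?_
    ext1 y
    simp
  calc T t * minkAdjoint (T t) = T p * minkAdjoint (T p) :=
        hI.is_const_of_deriv_eq_zero hconn
          (fun s hs => (hderiv s hs).differentiableAt.differentiableWithinAt)
          (fun s hs => (hderiv s hs).deriv) ht hp
    _ = 1 := by rw [hTp, minkAdjoint_one, one_mul]

lemma minkAdjoint_surjective (hT : IsCalapsoPrimitive lam c T I) (hI : IsOpen I)
    (hconn : IsPreconnected I) {p t : ℝ} (hp : p ∈ I) (hTp : T p = 1) (ht : t ∈ I) :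
    Function.Surjective (minkAdjoint (T t)) := by
  have hinv : Function.LeftInverse (T t) (minkAdjoint (T t)) := fun x =>
    DFunLike.congr_fun (hT.mul_minkAdjoint_eq_one hI hconn hp hTp ht) x
  exact LinearMap.injective_iff_surjective (f := (minkAdjoint (T t)).toLinearMap).1 hinv.injective

end IsCalapsoPrimitive

end Parallel

section FlatLift

lemma hasDerivAt_deriv_of_contDiffOn {F : Type*} [NormedAddCommGroup F] [NormedSpace ℝ F]
    {f : ℝ → F} {I : Set ℝ} {t : ℝ} (hf : ContDiffOn ℝ 1 f I) (hI : IsOpen I) (ht : t ∈ I) :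
    HasDerivAt f (deriv f t) t :=
  ((hf.differentiableOn one_ne_zero).differentiableAt (hI.mem_nhds ht)).hasDerivAt

lemma hasDerivAt_eq_zero_of_eqOn_const {f : ℝ → ℝ} {f' k t : ℝ} {I : Set ℝ} (hI : IsOpen I)
    (ht : t ∈ I) (hfk : ∀ s ∈ I, f s = k) (hf : HasDerivAt f f' t) : f' = 0 :=
  hf.unique ((hasDerivAt_const t k).congr_of_eventuallyEq (eventually_of_mem (hI.mem_nhds ht) hfk))

/-- A light-cone lift on `I` that is flat, i.e. has unit speed. Three derivatives suffice for the
asymptotics of its Calapso transforms. -/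
structure IsFlatLift (c : ℝ → E n) (I : Set ℝ) : Prop where
  contDiffOn : ContDiffOn ℝ 3 c I
  mink_self : ∀ t ∈ I, mink (c t) (c t) = 0
  mink_deriv_deriv : ∀ t ∈ I, mink (deriv c t) (deriv c t) = 1

namespace IsFlatLift

variable {c z : ℝ → E n} {I J : Set ℝ} {lam t : ℝ}

lemma mono (hc : IsFlatLift c I) (hJI : J ⊆ I) : IsFlatLift c J :=
  ⟨hc.contDiffOn.mono hJI, fun t ht => hc.mink_self t (hJI ht),
    fun t ht => hc.mink_deriv_deriv t (hJI ht)⟩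

lemma contDiffOn_deriv (hc : IsFlatLift c I) (hI : IsOpen I) : ContDiffOn ℝ 2 (deriv c) I :=
  hc.contDiffOn.deriv_of_isOpen hI (by norm_num)

lemma contDiffOn_deriv2 (hc : IsFlatLift c I) (hI : IsOpen I) :
    ContDiffOn ℝ 1 (deriv (deriv c)) I :=
  (hc.contDiffOn_deriv hI).deriv_of_isOpen hI (by norm_num)

lemma hasDerivAt (hc : IsFlatLift c I) (hI : IsOpen I) (ht : t ∈ I) : HasDerivAt c (deriv c t) t :=
  hasDerivAt_deriv_of_contDiffOn (hc.contDiffOn.of_le (by norm_num)) hI ht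

lemma hasDerivAt_deriv (hc : IsFlatLift c I) (hI : IsOpen I) (ht : t ∈ I) :
    HasDerivAt (deriv c) (deriv (deriv c) t) t :=
  hasDerivAt_deriv_of_contDiffOn ((hc.contDiffOn_deriv hI).of_le (by norm_num)) hI ht

lemma mink_deriv_right (hc : IsFlatLift c I) (hI : IsOpen I) (ht : t ∈ I) :
    mink (c t) (deriv c t) = 0 := by
  have hc' := hc.hasDerivAt hI ht
  have := hasDerivAt_eq_zero_of_eqOn_const hI ht hc.mink_self (hasDerivAt_mink hc' hc')
  rw [mink_comm (deriv c t)] at this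
  linarith

lemma mink_deriv2_left (hc : IsFlatLift c I) (hI : IsOpen I) (ht : t ∈ I) :
    mink (deriv (deriv c) t) (c t) = -1 := by
  have := hasDerivAt_eq_zero_of_eqOn_const hI ht (fun s hs => hc.mink_deriv_right hI hs)
    (hasDerivAt_mink (hc.hasDerivAt hI ht) (hc.hasDerivAt_deriv hI ht))
  rw [hc.mink_deriv_deriv t ht] at this
  rw [mink_comm]
  linarith

lemma mink_deriv2_deriv (hc : IsFlatLift c I) (hI : IsOpen I) (ht : t ∈ I) :
    mink (deriv (deriv c) t) (deriv c t) = 0 := by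
  have hc' := hc.hasDerivAt_deriv hI ht
  have := hasDerivAt_eq_zero_of_eqOn_const hI ht hc.mink_deriv_deriv (hasDerivAt_mink hc' hc')
  rw [mink_comm (deriv c t)] at this
  linarith

lemma exists_bound {ε b : ℝ} (hc : IsFlatLift c (Ioo (-ε) b)) (hε : 0 < ε) (hb : 0 < b) :
    ∃ B, 1 ≤ B ∧ ∀ t ∈ Icc 0 (b / 2),
      ‖c t‖ ≤ B ∧ ‖deriv c t‖ ≤ B ∧ ‖deriv (deriv (deriv c)) t‖ ≤ B := by
  have hsub : Icc 0 (b / 2) ⊆ Ioo (-ε) b := Icc_subset_Ioo (by linarith) (by linarith)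
  have hbound := fun {f : ℝ → E n} (hf : ContinuousOn f (Ioo (-ε) b)) =>
    isCompact_Icc.exists_bound_of_continuousOn (hf.mono hsub)
  obtain ⟨B₀, hB₀⟩ := hbound hc.contDiffOn.continuousOn
  obtain ⟨B₁, hB₁⟩ := hbound (hc.contDiffOn_deriv isOpen_Ioo).continuousOn
  obtain ⟨B₃, hB₃⟩ :=
    hbound ((hc.contDiffOn_deriv2 isOpen_Ioo).continuousOn_deriv_of_isOpen isOpen_Ioo le_rfl)
  refine ⟨max 1 (max B₀ (max B₁ B₃)), le_max_left _ _, fun t ht => ⟨?_, ?_, ?_⟩⟩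
  · exact (hB₀ t ht).trans (by simp)
  · exact (hB₁ t ht).trans (by simp)
  · exact (hB₃ t ht).trans (by simp)

end IsFlatLift

lemma IsParallelSection.hasDerivAt_mink {lam : ℝ} {c v z : ℝ → E n} {v' : E n} {I : Set ℝ} {t : ℝ}
    (hz : IsParallelSection lam c z I) (ht : t ∈ I) (hv : HasDerivAt v v' t) :
    HasDerivAt (fun s => mink (v s) (z s)) (mink v' (z t) - lam / t ^ 2 *
      (mink (c t) (z t) * mink (v t) (deriv c t) - mink (deriv c t) (z t) * mink (v t) (c t))) t :=
  (_root_.hasDerivAt_mink hv (hz t ht)).congr_deriv <| by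
    rw [mink_smul_right, mink_wedge_right, neg_mul, ← sub_eq_add_neg]

end FlatLift

section EulerCoordinates

/-- The first Euler coordinate of a section `z` along `c`. If `z` is parallel for the parameter `λ`
and `σ ^ 2 = 1 - 2 * λ`, then `eulerFst`, `eulerSnd` and `eulerTrd` form a scalar Euler system with
exponents `σ`, `-σ`, `0`, perturbed by a term involving the third derivative of `c`. -/
def eulerFst (c z : ℝ → E n) (t : ℝ) : ℝ := mink (c t) (z t) / t

/-- The second Euler coordinate of a section `z` along `c`, chosen so that
`t * eulerFst' = σ * eulerFst + eulerSnd` for parallel `z`. -/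
def eulerSnd (σ : ℝ) (c z : ℝ → E n) (t : ℝ) : ℝ :=
  mink (deriv c t) (z t) - (1 + σ) * eulerFst c z t

/-- The third Euler coordinate of a section `z` along `c`, chosen so that
`t * eulerSnd' = -σ * eulerSnd + eulerTrd` for parallel `z`. -/
def eulerTrd (lam : ℝ) (c z : ℝ → E n) (t : ℝ) : ℝ :=
  t * mink (deriv (deriv c) t) (z t) - mink (deriv c t) (z t) + lam * eulerFst c z t

variable {lam σ K τ t : ℝ} {c z : ℝ → E n} {I : Set ℝ}

lemma hasDerivAt_eulerFst (hc : IsFlatLift c I) (hI : IsOpen I) (hz : IsParallelSection lam c z I)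
    (ht : t ∈ I) (ht0 : t ≠ 0) :
    HasDerivAt (eulerFst c z) ((mink (deriv c t) (z t) - eulerFst c z t) / t) t := by
  refine ((hz.hasDerivAt_mink ht (hc.hasDerivAt hI ht)).fun_div (hasDerivAt_id t)
    ht0).congr_deriv ?_
  rw [hc.mink_deriv_right hI ht, hc.mink_self t ht, eulerFst]
  simp only [id_eq]
  field_simp
  ring

lemma IsParallelSection.hasDerivAt_mink_deriv (hc : IsFlatLift c I) (hI : IsOpen I)
    (hz : IsParallelSection lam c z I) (ht : t ∈ I) (ht0 : t ≠ 0) :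
    HasDerivAt (fun s => mink (deriv c s) (z s))
      (mink (deriv (deriv c) t) (z t) - lam * eulerFst c z t / t) t := by
  refine (hz.hasDerivAt_mink ht (hc.hasDerivAt_deriv hI ht)).congr_deriv ?_
  rw [hc.mink_deriv_deriv t ht, mink_comm _ (c t), hc.mink_deriv_right hI ht, eulerFst]
  field_simp
  ring

lemma IsParallelSection.hasDerivAt_mink_deriv2 (hc : IsFlatLift c I) (hI : IsOpen I)
    (hz : IsParallelSection lam c z I) (ht : t ∈ I) :
    HasDerivAt (fun s => mink (deriv (deriv c) s) (z s))
      (mink (deriv (deriv (deriv c)) t) (z t) - lam / t ^ 2 * mink (deriv c t) (z t)) t := by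
  refine (hz.hasDerivAt_mink ht
    (hasDerivAt_deriv_of_contDiffOn (hc.contDiffOn_deriv2 hI) hI ht)).congr_deriv ?_
  rw [hc.mink_deriv2_deriv hI ht, hc.mink_deriv2_left hI ht]
  ring

lemma hasDerivAt_eulerSnd (hσ : σ ^ 2 = 1 - 2 * lam) (hc : IsFlatLift c I) (hI : IsOpen I)
    (hz : IsParallelSection lam c z I) (ht : t ∈ I) (ht0 : t ≠ 0) :
    HasDerivAt (eulerSnd σ c z) ((-σ * eulerSnd σ c z t + eulerTrd lam c z t) / t) t := by
  refine ((hz.hasDerivAt_mink_deriv hc hI ht ht0).fun_sub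
    ((hasDerivAt_eulerFst hc hI hz ht ht0).const_mul (1 + σ))).congr_deriv ?_
  rw [eulerSnd, eulerTrd]
  field_simp
  linear_combination -eulerFst c z t * hσ

lemma hasDerivAt_eulerTrd (hc : IsFlatLift c I) (hI : IsOpen I)
    (hz : IsParallelSection lam c z I) (ht : t ∈ I) (ht0 : t ≠ 0) :
    HasDerivAt (eulerTrd lam c z) (t * mink (deriv (deriv (deriv c)) t) (z t)) t := by
  refine ((((hasDerivAt_id t).fun_mul (hz.hasDerivAt_mink_deriv2 hc hI ht)).fun_sub
    (hz.hasDerivAt_mink_deriv hc hI ht ht0)).fun_add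
    ((hasDerivAt_eulerFst hc hI hz ht ht0).const_mul lam)).congr_deriv ?_
  simp only [id_eq]
  field_simp
  ring

lemma norm_smul_wedge_deriv_le_eulerCoordinates {B : ℝ} (hσ : 0 ≤ σ) (ht : t ∈ Ioc 0 1)
    (hB₀ : ‖c t‖ ≤ B) (hB₁ : ‖deriv c t‖ ≤ B) :
    ‖-lam • wedge (c t) (deriv c t) (z t)‖ ≤
      |lam| * (2 + σ) * B * (|eulerFst c z t| + |eulerSnd σ c z t|) := by
  have hB : 0 ≤ B := (norm_nonneg _).trans hB₀
  have hfst : |mink (c t) (z t)| ≤ |eulerFst c z t| := by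
    rw [eulerFst, abs_div, abs_of_pos ht.1]
    exact le_div_self (abs_nonneg _) ht.1 ht.2
  have hsnd : |mink (deriv c t) (z t)| ≤ |eulerSnd σ c z t| + (1 + σ) * |eulerFst c z t| := by
    rw [← abs_of_nonneg (by positivity : 0 ≤ 1 + σ), ← abs_mul]
    simpa [eulerSnd] using abs_add_le (eulerSnd σ c z t) ((1 + σ) * eulerFst c z t)
  rw [norm_smul, norm_neg, Real.norm_eq_abs, mul_assoc, mul_assoc]
  refine mul_le_mul_of_nonneg_left ((norm_wedge_apply_le _ _ _).trans ?_) (abs_nonneg lam)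
  calc |mink (c t) (z t)| * ‖deriv c t‖ + |mink (deriv c t) (z t)| * ‖c t‖
      ≤ |eulerFst c z t| * B + (|eulerSnd σ c z t| + (1 + σ) * |eulerFst c z t|) * B := by gcongr
    _ ≤ (2 + σ) * (B * (|eulerFst c z t| + |eulerSnd σ c z t|)) := by
        have : 0 ≤ (1 + σ) * (B * |eulerSnd σ c z t|) := by positivity
        linarith

lemma perturbedEulerSystem_eulerCoordinates {B : ℝ} (hσ0 : 0 ≤ σ) (hσ : σ ^ 2 = 1 - 2 * lam)
    (hB : 1 ≤ B) (hBK : (1 + |lam| * (2 + σ)) * B ≤ K) (hτ : 64 * K ^ 2 * τ ≤ 1)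
    (hcB : ∀ t ∈ Ioo 0 τ, ‖c t‖ ≤ B ∧ ‖deriv c t‖ ≤ B ∧ ‖deriv (deriv (deriv c)) t‖ ≤ B)
    (hc : IsFlatLift c (Ioo 0 τ)) (hz : IsParallelSection lam c z (Ioo 0 τ)) :
    PerturbedEulerSystem σ K τ (eulerFst c z) (eulerSnd σ c z) (eulerTrd lam c z)
      (fun t => t * mink (deriv (deriv (deriv c)) t) (z t)) (fun t => t • z t)
      (fun t => -lam • wedge (c t) (deriv c t) (z t)) := by
  have hlamB : 0 ≤ |lam| * (2 + σ) * B := by positivity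
  have hK1 : 1 ≤ K := by linarith
  refine ⟨hσ0, by linarith, hτ, fun t ht => ?_, fun t ht => ?_, fun t ht => ?_, fun t ht => ?_,
    fun t ht => ?_, fun t ht => ?_⟩
  · refine (hasDerivAt_eulerFst hc isOpen_Ioo hz ht ht.1.ne').congr_deriv ?_
    rw [eulerSnd]
    ring
  · exact hasDerivAt_eulerSnd hσ hc isOpen_Ioo hz ht ht.1.ne'
  · exact hasDerivAt_eulerTrd hc isOpen_Ioo hz ht ht.1.ne'
  · refine ((hasDerivAt_id t).fun_smul (hz t ht)).congr_deriv ?_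
    have := ht.1.ne'
    simp only [id_eq]
    match_scalars <;> field_simp
  · rw [abs_mul, abs_of_pos ht.1, norm_smul, Real.norm_of_nonneg ht.1.le, mul_left_comm]
    gcongr
    · exact ht.1.le
    · refine (abs_mink_le _ _).trans ?_
      gcongr
      linarith [(hcB t ht).2.2]
  · have ht1 : t ≤ 1 := calc
      t ≤ τ := ht.2.le
      _ ≤ 64 * K ^ 2 * τ :=
        le_mul_of_one_le_left (ht.1.trans ht.2).le (by linarith [one_le_pow₀ hK1 (n := 2)])
      _ ≤ 1 := hτ
    refine (norm_smul_wedge_deriv_le_eulerCoordinates hσ0 ⟨ht.1, ht1⟩ (hcB t ht).1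
      (hcB t ht).2.1).trans ?_
    gcongr
    linarith

end EulerCoordinates

section Convergence

lemma IsFlatLift.exists_perturbedEulerSystem {ε b lam σ : ℝ} {c : ℝ → E n}
    (hc : IsFlatLift c (Ioo (-ε) b)) (hε : 0 < ε) (hb : 0 < b) (hσ0 : 0 ≤ σ)
    (hσ : σ ^ 2 = 1 - 2 * lam) :
    ∃ K, ∃ τ ∈ Ioo 0 b, (∀ t ∈ Ioo 0 τ, ‖c t‖ ≤ K) ∧
      ∀ z, IsParallelSection lam c z (Ioo 0 b) →
        PerturbedEulerSystem σ K τ (eulerFst c z) (eulerSnd σ c z) (eulerTrd lam c z)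
          (fun t => t * mink (deriv (deriv (deriv c)) t) (z t)) (fun t => t • z t)
          (fun t => -lam • wedge (c t) (deriv c t) (z t)) := by
  obtain ⟨B, hB, hcB⟩ := hc.exists_bound hε hb
  have hlamB : 0 ≤ |lam| * (2 + σ) * B := by positivity
  set K := (1 + |lam| * (2 + σ)) * B
  have hBK : B ≤ K := by linarith
  have hKpos : 0 < 64 * K ^ 2 := by positivity
  set τ := min (b / 2) (1 / (64 * K ^ 2))
  have hτb : τ ≤ b / 2 := min_le_left _ _
  have hτK : 64 * K ^ 2 * τ ≤ 1 := (le_div_iff₀' hKpos).1 (min_le_right _ _)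
  have hIcc : ∀ t ∈ Ioo 0 τ, t ∈ Icc 0 (b / 2) := fun t ht => ⟨ht.1.le, ht.2.le.trans hτb⟩
  have hτ_mem : τ ∈ Ioo 0 b := ⟨by positivity, by linarith⟩
  refine ⟨K, τ, hτ_mem, fun t ht => (hcB t (hIcc t ht)).1.trans hBK, fun z hz => ?_⟩
  exact perturbedEulerSystem_eulerCoordinates hσ0 hσ hB le_rfl hτK (fun t ht => hcB t (hIcc t ht))
    (hc.mono (Ioo_subset_Ioo (by linarith) hτ_mem.2.le))
    fun t ht => hz t ⟨ht.1, ht.2.trans hτ_mem.2⟩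

lemma exists_tendsto_eulerScale_mul_eulerFst_ne_zero {lam σ K τ t₀ : ℝ} {c z : ℝ → E n}
    (hc : IsFlatLift c (Ioo 0 τ)) (ht₀ : t₀ ∈ Ioo 0 τ) (hcK : ‖c t₀‖ ≤ K) (hz₀ : z t₀ = c t₀)
    {f : ℝ → ℝ} {R : ℝ → E n} (hsys : PerturbedEulerSystem σ K τ (eulerFst c z) (eulerSnd σ c z)
      (eulerTrd lam c z) f (fun t => t • z t) R) :
    ∃ l ≠ 0, Tendsto (fun t => eulerScale σ t * eulerFst c z t) (𝓝[>] 0) (𝓝 l) := by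
  have hfst : eulerFst c z t₀ = 0 := by rw [eulerFst, hz₀, hc.mink_self t₀ ht₀, zero_div]
  have hderiv : mink (deriv c t₀) (z t₀) = 0 := by
    rw [hz₀, mink_comm, hc.mink_deriv_right isOpen_Ioo ht₀]
  refine hsys.exists_tendsto_eulerScale_mul_ne_zero ht₀ hfst ?_ ?_ ?_
  · rw [eulerSnd, hderiv, hfst, mul_zero, sub_zero]
  · rw [eulerTrd, hderiv, hfst, hz₀, hc.mink_deriv2_left isOpen_Ioo ht₀]
    ring
  · rw [hz₀, norm_smul, Real.norm_of_nonneg ht₀.1.le, mul_comm]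
    exact mul_le_mul_of_nonneg_right hcK ht₀.1.le

end Convergence

theorem stmt15_general {ε b : ℝ} (hε : 0 < ε) {c : ℝ → E n}
    (hc : ContDiffOn ℝ 3 c (Ioo (-ε) b)) (hcnull : ∀ t ∈ Ioo (-ε) b, mink (c t) (c t) = 0)
    (hcreg : ∀ t ∈ Ioo (-ε) b, mink (deriv c t) (deriv c t) = 1)
    {lam : ℝ} (hlam : 2 * lam ≤ 1) {p : ℝ} (hp : p ∈ Ioo 0 b)
    {T : ℝ → E n →L[ℝ] E n} (hTp : T p = 1)
    (hT : ∀ t ∈ Ioo 0 b, HasDerivAt T ((lam / t ^ 2) • (T t * wedge (c t) (deriv c t))) t) :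
    ∃ x ≠ 0, Tendsto (fun t => (eulerScale √(1 - 2 * lam) t / t) • T t (c t)) (𝓝[>] 0) (𝓝 x) := by
  have hflat : IsFlatLift c (Ioo (-ε) b) := ⟨hc, hcnull, hcreg⟩
  have hprim : IsCalapsoPrimitive lam c T (Ioo 0 b) := hT
  obtain ⟨K, τ, hτ, hcK, hsys⟩ := hflat.exists_perturbedEulerSystem hε (hp.1.trans hp.2)
    (Real.sqrt_nonneg _) (Real.sq_sqrt (sub_nonneg.2 hlam))
  set σ := √(1 - 2 * lam)
  have ht₀ : τ / 2 ∈ Ioo 0 τ := ⟨half_pos hτ.1, half_lt_self hτ.1⟩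
  have hmink : ∀ y t, mink ((eulerScale σ t / t) • T t (c t)) y =
      eulerScale σ t * eulerFst c (fun s => minkAdjoint (T s) y) t := fun y t => by
    rw [mink_smul_left, eulerFst, mink_minkAdjoint_right, div_mul_eq_mul_div, mul_div_assoc]
  obtain ⟨x, hx⟩ : ∃ x, Tendsto (fun t => (eulerScale σ t / t) • T t (c t)) (𝓝[>] 0) (𝓝 x) := by
    refine exists_tendsto_of_mink_left fun y => ?_
    obtain ⟨l, hl, -⟩ :=
      (hsys _ (hprim.isParallelSection_minkAdjoint y)).exists_tendsto_eulerScale_mul ht₀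
    exact ⟨l, hl.congr fun t => (hmink y t).symm⟩
  obtain ⟨y, hy⟩ := hprim.minkAdjoint_surjective isOpen_Ioo isPreconnected_Ioo hp hTp
    ⟨ht₀.1, ht₀.2.trans hτ.2⟩ (c (τ / 2))
  obtain ⟨l, hl0, hl⟩ := exists_tendsto_eulerScale_mul_eulerFst_ne_zero
    (hflat.mono (Ioo_subset_Ioo (by linarith) hτ.2.le)) ht₀ (hcK _ ht₀) hy
    (hsys _ (hprim.isParallelSection_minkAdjoint y))
  refine ⟨x, ?_, hx⟩
  rintro rfl
  have hlim := (tendsto_mink_left hx y).congr (hmink y)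
  exact hl0 (tendsto_nhds_unique hl (by simpa [mink_eq_inner] using hlim))

/-- Theorem 5.3: at a second-order pole, all λ-Calapso transforms with
1−2λ ≥ 0 converge. -/
theorem stmt15 {n : ℕ} (ε b : ℝ) (hε : 0 < ε) (hb : 0 < b)
    (c : ℝ → E n) (hc : ContDiffOn ℝ (⊤ : ℕ∞) c (Set.Ioo (-ε) b))
    (hcnull : ∀ t ∈ Set.Ioo (-ε) b, mink (c t) (c t) = 0)
    (hcne : ∀ t ∈ Set.Ioo (-ε) b, c t ≠ 0)
    (hcreg : ∀ t ∈ Set.Ioo (-ε) b, mink (deriv c t) (deriv c t) = 1)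
    (lam : ℝ) (hlam2 : 2 * lam ≤ 1)
    (p : ℝ) (hp : p ∈ Set.Ioo (0:ℝ) b)
    (T : ℝ → E n →L[ℝ] E n) (hTp : T p = 1)
    (hT : ∀ t ∈ Set.Ioo (0:ℝ) b,
      HasDerivAt T ((lam / t ^ 2) • (T t * wedge (c t) (deriv c t))) t) :
    ∃ x : E n, x ≠ 0 ∧ ∃ r : ℝ → ℝ, (∀ t ∈ Set.Ioo (0:ℝ) b, r t ≠ 0) ∧
      Tendsto (fun t : ℝ => r t • (T t) (c t)) (𝓝[>] 0) (𝓝 x) := by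
  obtain ⟨x, hx0, hx⟩ := stmt15_general hε (hc.of_le (WithTop.coe_le_coe.2 le_top)) hcnull hcreg
    hlam2 hp hTp hT
  exact ⟨x, hx0, _, fun t ht => div_ne_zero (eulerScale_ne_zero _ ht.1) ht.1.ne', hx⟩
end
end

section
/- Let m ≥ 1, let 𝒱 ⊆ ℝ^m, and let q ∈ ℝ^m be a cluster point of 𝒱. Let x, y ∈ ℝ^{n+2} be null and nonzero, let A:𝒱 → End(ℝ^{n+2}) satisfy A(v) → xy* as v → q within 𝒱, and let u:𝒱 → ℝ^{n+2} satisfy ⟨u(v),u(v)⟩ = 0 and ⟨u(v),y⟩ = −1 for all v ∈ 𝒱. Assume there is δ > 0 such that |u(v) − s·y| ≥ δ·|u(v)| for all v ∈ 𝒱 and all s ∈ ℝ (the projectivized points ⟨u(v)⟩ avoid a neighbourhood of ⟨y⟩). Then u is bounded in Euclidean norm on 𝒱, and A(v)(u(v)) → −x as v → q within 𝒱. -/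
open scoped BigOperators Topology
open Filter Set MeasureTheory

noncomputable section

variable {n : ℕ}

/-- A nonzero `x` is a projective accumulation point at `0` of a curve
`γ : (0,b) → ℝ^{n+2} ∖ {0}` if some sequence `tᵢ → 0⁺` in `(0,b)` and reals `rᵢ`
satisfy `rᵢ • γ (tᵢ) → x`. -/
def projAccum {n : ℕ} (b : ℝ) (γ : ℝ → E n) (x : E n) : Prop :=
  ∃ (ts : ℕ → ℝ) (rs : ℕ → ℝ), (∀ i, ts i ∈ Set.Ioo (0:ℝ) b) ∧
    Tendsto ts atTop (𝓝 0) ∧ Tendsto (fun i => rs i • γ (ts i)) atTop (𝓝 x)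

/-!
If `y` is causal and nonzero, its last coordinate `y_{n+2}` does not vanish, so for every `w` there
is a real `s = w_{n+2} / y_{n+2}` for which `w - s y` has last coordinate `0`. On that hyperplane
the Minkowski form is the Euclidean one, hence for causal `w`
`‖w - s y‖² = ⟨w,w⟩ - 2 s ⟨w,y⟩ + s² ⟨y,y⟩ ≤ 2 |s| |⟨w,y⟩|`, which grows at most linearly in `‖w‖`.
If `w` stays away from the line of `y`, the left side is at least `δ² ‖w‖²`, and so `w` is bounded.
Convergence in operator norm is uniform on bounded sets, so `A(v)(u(v))` has the same limit as
`xy*(u(v)) = ⟨u(v),y⟩ x`.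
-/

lemma mink_eq_inner_sub (x y : E n) :
    mink x y = inner ℝ x y - 2 * (x (Fin.last (n + 1)) * y (Fin.last (n + 1))) := by
  have sign_mul (i : Fin (n + 2)) :
      (if i = Fin.last (n + 1) then (-1 : ℝ) else 1) * x i * y i =
        x i * y i - if i = Fin.last (n + 1) then 2 * (x i * y i) else 0 := by
    split_ifs <;> ring
  simp only [mink, sign_mul, Finset.sum_sub_distrib, Finset.sum_ite_eq', Finset.mem_univ, if_true,
    PiLp.inner_apply, RCLike.inner_apply, conj_trivial, mul_comm (y _)]

lemma mink_self_eq_norm_sq_sub (z : E n) :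
    mink z z = ‖z‖ ^ 2 - 2 * z (Fin.last (n + 1)) ^ 2 := by
  rw [mink_eq_inner_sub, real_inner_self_eq_norm_sq, sq (z _)]

lemma last_ne_zero_of_mink_self_nonpos {y : E n} (hy : mink y y ≤ 0) (hy₀ : y ≠ 0) :
    y (Fin.last (n + 1)) ≠ 0 := by
  intro hlast
  have hpos : 0 < ‖y‖ ^ 2 := pow_pos (norm_pos_iff.mpr hy₀) 2
  rw [mink_self_eq_norm_sq_sub, hlast] at hy
  linarith

lemma mink_self_sub_smul (w y : E n) (s : ℝ) :
    mink (w - s • y) (w - s • y) = mink w w - 2 * s * mink w y + s ^ 2 * mink y y := by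
  rw [sub_eq_add_neg, ← neg_smul]
  simp only [mink_add_left, mink_add_right, mink_smul_left, mink_smul_right, mink_comm y w]
  ring

lemma norm_sq_sub_div_smul_eq {y : E n} (w : E n) (hy : y (Fin.last (n + 1)) ≠ 0) :
    let s := w (Fin.last (n + 1)) / y (Fin.last (n + 1))
    ‖w - s • y‖ ^ 2 = mink w w - 2 * s * mink w y + s ^ 2 * mink y y := by
  intro s
  have hlast : (w - s • y) (Fin.last (n + 1)) = 0 := by
    simp only [s, PiLp.sub_apply, PiLp.smul_apply, smul_eq_mul, div_mul_cancel₀ _ hy, sub_self]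
  rw [← mink_self_sub_smul, mink_self_eq_norm_sq_sub, hlast]
  ring

lemma exists_norm_sq_sub_smul_le {w y : E n} (hw : mink w w ≤ 0) (hy : mink y y ≤ 0)
    (hy₀ : y ≠ 0) :
    ∃ s : ℝ, ‖w - s • y‖ ^ 2 ≤ 2 * |mink w y| / |y (Fin.last (n + 1))| * ‖w‖ := by
  have hlast := last_ne_zero_of_mink_self_nonpos hy hy₀
  set s := w (Fin.last (n + 1)) / y (Fin.last (n + 1)) with hs
  have hs_le : |s| ≤ ‖w‖ / |y (Fin.last (n + 1))| := by
    rw [hs, abs_div]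
    gcongr
    exact PiLp.norm_apply_le w _
  refine ⟨s, ?_⟩
  calc ‖w - s • y‖ ^ 2
      = mink w w - 2 * s * mink w y + s ^ 2 * mink y y := norm_sq_sub_div_smul_eq w hlast
    _ ≤ -2 * (s * mink w y) := by
        linarith [mul_nonpos_of_nonneg_of_nonpos (sq_nonneg s) hy]
    _ ≤ 2 * (|s| * |mink w y|) := by
        linarith [neg_abs_le (s * mink w y), abs_mul s (mink w y)]
    _ ≤ 2 * (‖w‖ / |y (Fin.last (n + 1))| * |mink w y|) := by gcongr
    _ = 2 * |mink w y| / |y (Fin.last (n + 1))| * ‖w‖ := by ring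

lemma norm_le_of_forall_le_norm_sub_smul {w y : E n} (hw : mink w w ≤ 0) (hy : mink y y ≤ 0)
    (hy₀ : y ≠ 0) {δ : ℝ} (hδ : 0 < δ) (havoid : ∀ s : ℝ, δ * ‖w‖ ≤ ‖w - s • y‖) :
    ‖w‖ ≤ 2 * |mink w y| / |y (Fin.last (n + 1))| / δ ^ 2 := by
  obtain ⟨s, hs⟩ := exists_norm_sq_sub_smul_le hw hy hy₀
  rcases (norm_nonneg w).eq_or_lt with hw₀ | hw₀
  · rw [← hw₀]
    positivity
  · have hquad : (δ * ‖w‖) ^ 2 ≤ 2 * |mink w y| / |y (Fin.last (n + 1))| * ‖w‖ :=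
      (pow_le_pow_left₀ (by positivity) (havoid s) 2).trans hs
    rw [le_div_iff₀ (by positivity)]
    refine le_of_mul_le_mul_right ?_ hw₀
    linarith

lemma rankOne_apply (v w z : E n) : rankOne v w z = mink z w • v :=
  rfl

lemma tendsto_clm_apply_of_isBoundedUnder {α 𝕜 F G : Type*} [NontriviallyNormedField 𝕜]
    [SeminormedAddCommGroup F] [NormedSpace 𝕜 F] [SeminormedAddCommGroup G] [NormedSpace 𝕜 G]
    {l : Filter α} {A : α → F →L[𝕜] G} {B : F →L[𝕜] G} {u : α → F} {z : G}
    (hA : Tendsto A l (𝓝 B)) (hu : IsBoundedUnder (· ≤ ·) l fun a => ‖u a‖)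
    (hB : Tendsto (fun a => B (u a)) l (𝓝 z)) :
    Tendsto (fun a => A a (u a)) l (𝓝 z) := by
  have hsub : Tendsto (fun a => A a - B) l (𝓝 0) := tendsto_sub_nhds_zero_iff.mpr hA
  have hdiff : Tendsto (fun a => (A a - B) (u a)) l (𝓝 0) :=
    hsub.op_zero_isBoundedUnder_le hu (fun T f => T f) ContinuousLinearMap.le_opNorm
  simpa only [sub_apply, sub_add_cancel, zero_add] using hdiff.add hB

theorem stmt17_general {α : Type*} {l : Filter α} {V : Set α} (hV : V ∈ l) (x : E n) {y : E n}
    (hy : mink y y ≤ 0) (hy₀ : y ≠ 0) {A : α → E n →L[ℝ] E n}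
    (hA : Tendsto A l (𝓝 (rankOne x y))) {u : α → E n} (hu : ∀ v ∈ V, mink (u v) (u v) ≤ 0)
    {c : ℝ} (huy : ∀ v ∈ V, mink (u v) y = c) {δ : ℝ} (hδ : 0 < δ)
    (havoid : ∀ v ∈ V, ∀ s : ℝ, δ * ‖u v‖ ≤ ‖u v - s • y‖) :
    (∃ R : ℝ, ∀ v ∈ V, ‖u v‖ ≤ R) ∧ Tendsto (fun v => A v (u v)) l (𝓝 (c • x)) := by
  have hbound : ∀ v ∈ V, ‖u v‖ ≤ 2 * |c| / |y (Fin.last (n + 1))| / δ ^ 2 := fun v hv =>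
    huy v hv ▸ norm_le_of_forall_le_norm_sub_smul (hu v hv) hy hy₀ hδ (havoid v hv)
  have hlim : Tendsto (fun v => rankOne x y (u v)) l (𝓝 (c • x)) :=
    tendsto_const_nhds.congr' <| eventually_of_mem hV fun v hv => by
      simp only [rankOne_apply, huy v hv]
  exact ⟨⟨_, hbound⟩, tendsto_clm_apply_of_isBoundedUnder hA
    (isBoundedUnder_of_eventually_le (eventually_of_mem hV hbound)) hlim⟩

/-- Lemma 5.5. -/
theorem stmt17 {n : ℕ} (m : ℕ) (hm : 1 ≤ m)
    (V : Set (Fin m → ℝ)) (q : Fin m → ℝ) (hq : ClusterPt q (Filter.principal V))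
    (x y : E n) (hxnull : mink x x = 0) (hx : x ≠ 0)
    (hynull : mink y y = 0) (hy : y ≠ 0)
    (A : (Fin m → ℝ) → E n →L[ℝ] E n)
    (hA : Tendsto A (𝓝[V] q) (𝓝 (rankOne x y)))
    (u : (Fin m → ℝ) → E n)
    (hunull : ∀ v ∈ V, mink (u v) (u v) = 0)
    (huy : ∀ v ∈ V, mink (u v) y = -1)
    (δ : ℝ) (hδ : 0 < δ)
    (havoid : ∀ v ∈ V, ∀ s : ℝ, δ * ‖u v‖ ≤ ‖u v - s • y‖) :
    (∃ R : ℝ, ∀ v ∈ V, ‖u v‖ ≤ R) ∧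
    Tendsto (fun v => (A v) (u v)) (𝓝[V] q) (𝓝 (-x)) := by
  simpa only [neg_one_smul] using stmt17_general self_mem_nhdsWithin x hynull.le hy hA
    (fun v hv => (hunull v hv).le) huy hδ havoid
end
end
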